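/- Let G = (V, E) be a finite simple graph with distinguished vertices a = v₁ and b = vₙ, n = |V|, and let Net_h(G) be the LDC network obtained from the approximation network Net(G) by removing the buses g', l' and all lines incident to them, and removing the minimum-demand constraint at l (p⁻(l) = 0). Then MSF(Net_h(G)) = 2 if and only if G has a Hamiltonian path from a to b. -/

import Mathlib

open scoped BigOperators ENNReal Classical

/-- A Linear DC (LDC) power network on the finite bus type `V`.
`adj a b` states that there is a line between buses `a` and `b` (it is meant to be
symmetric); `cap`/`sus` give the capacity and susceptance of that line; `pmin`/`pmax`
are the minimum/maximum demand, `gmax` is the maximum generation (`⊤` meaning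
unbounded) and `cost` is the generation cost. -/
structure LDCNetwork (V : Type*) [Fintype V] where
  adj : V → V → Prop
  cap : V → V → ℝ
  sus : V → V → ℝ
  pmin : V → ℝ
  pmax : V → ℝ≥0∞
  gmax : V → ℝ≥0∞
  cost : V → ℝ

/-- A candidate switching solution: the set of switched-off lines (as a relation on
buses), the phase angles `theta`, the generation `gen` and the served demand `dem`. -/
structure LDCSolution (V : Type*) [Fintype V] where
  switched : V → V → Prop
  theta : V → ℝ
  gen : V → ℝ
  dem : V → ℝ

/-- Feasibility of a switching solution `S` for the network `N`: switched-off lines are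
lines of the network and switching is symmetric; the flow `sus·(θ a - θ b)` of every
non-switched line is within its capacity; the demand and generation bounds hold; and
Kirchhoff's conservation law holds at every bus. -/
def LDCSolution.IsFeasible {V : Type*} [Fintype V] (S : LDCSolution V)
    (N : LDCNetwork V) : Prop :=
  (∀ a b, S.switched a b → N.adj a b) ∧
  (∀ a b, S.switched a b → S.switched b a) ∧
  (∀ a b, N.adj a b → ¬ S.switched a b →
      |N.sus a b * (S.theta a - S.theta b)| ≤ N.cap a b) ∧
  (∀ v, N.pmin v ≤ S.dem v ∧ 0 ≤ S.dem v ∧ ENNReal.ofReal (S.dem v) ≤ N.pmax v) ∧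
  (∀ v, 0 ≤ S.gen v ∧ ENNReal.ofReal (S.gen v) ≤ N.gmax v) ∧
  (∀ v, (∑ b : V, if N.adj v b ∧ ¬ S.switched v b
          then N.sus v b * (S.theta v - S.theta b) else 0) = S.gen v - S.dem v)

/-- Build an LDC network from a one-directional line specification:
`spec p q = some (c, s)` means that there is a line between buses `p` and `q`
with capacity `c` and susceptance `s`. -/
noncomputable def mkNet {V : Type*} [Fintype V] (spec : V → V → Option (ℝ × ℝ))
    (pmin : V → ℝ) (pmax gmax : V → ℝ≥0∞) (cost : V → ℝ) : LDCNetwork V where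
  adj a b := (spec a b).isSome ∨ (spec b a).isSome
  cap a b := ((spec a b).map Prod.fst).getD (((spec b a).map Prod.fst).getD 0)
  sus a b := ((spec a b).map Prod.snd).getD (((spec b a).map Prod.snd).getD 0)
  pmin := pmin
  pmax := pmax
  gmax := gmax
  cost := cost

/-- Buses of the Hamiltonian-path network `Net_h(G)`: the vertices of `G` together
with a generator `g` and a load `l`. -/
inductive HBus (V : Type*) where
  | vert : V → HBus V
  | g : HBus V
  | l : HBus V
  deriving DecidableEq, Fintype

/-- The lines of `Net_h(G)` where `a` and `b` are the distinguished vertices and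
`n = |V|`: a line `({u,v}, 1, 1)` for every edge `{u,v}` of `G`, together with
`({g,a}, 1, 1)`, `({b,l}, 1, 1)` and `({g,l}, 1, 1/(n+1))`. -/
noncomputable def hamSpec {V : Type*} [Fintype V] (G : SimpleGraph V) (a b : V) :
    HBus V → HBus V → Option (ℝ × ℝ) := fun p q =>
  let n : ℝ := Fintype.card V
  match p, q with
  | .vert u, .vert v => if G.Adj u v then some (1, 1) else none
  | .g, .vert v => if v = a then some (1, 1) else none
  | .vert v, .l => if v = b then some (1, 1) else none
  | .g, .l => some (1, 1 / (n + 1))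
  | _, _ => none

/-- The network `Net_h(G)`: `g⁺(g) = ⊤`, `p⁺(l) = ⊤` and `p⁻(l) = 0`; all other
bounds are `0`. -/
noncomputable def hamNet {V : Type*} [Fintype V] (G : SimpleGraph V) (a b : V) :
    LDCNetwork (HBus V) :=
  mkNet (hamSpec G a b)
    (fun _ => 0)
    (fun p => match p with
      | .l => ⊤
      | _ => 0)
    (fun p => match p with
      | .g => ⊤
      | _ => 0)
    (fun _ => 0)

theorem HBus.sum_eq {V : Type*} [Fintype V] (f : HBus V → ℝ) :
    ∑ x, f x = (∑ v, f (.vert v)) + f .g + f .l := by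
  let e : HBus V ≃ Option (Option V) :=
    { toFun := fun x => match x with
        | .vert v => some (some v)
        | .g => some none
        | .l => none
      invFun := fun x => match x with
        | some (some v) => .vert v
        | some none => .g
        | none => .l
      left_inv := by rintro (_ | _ | _) <;> rfl
      right_inv := by rintro (_ | _ | _) <;> rfl }
  rw [← e.symm.sum_comp f, Fintype.sum_option, Fintype.sum_option]
  change f .l + (f .g + ∑ v, f (.vert v)) = _
  ring

/-- The concrete content of feasibility. -/
theorem ham_extract {V : Type*} [Fintype V] (G : SimpleGraph V) (a b : V)
    (S : LDCSolution (HBus V)) (hS : S.IsFeasible (hamNet G a b)) :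
    (∀ v, (∑ w, if G.Adj v w ∧ ¬ S.switched (.vert v) (.vert w) then
        S.theta (.vert v) - S.theta (.vert w) else 0)
        + (if v = a ∧ ¬ S.switched (.vert v) .g then S.theta (.vert v) - S.theta .g else 0)
        + (if v = b ∧ ¬ S.switched (.vert v) .l then S.theta (.vert v) - S.theta .l else 0)
        = 0) ∧
    (∀ u v, G.Adj u v → ¬ S.switched (.vert u) (.vert v) →
      |S.theta (.vert u) - S.theta (.vert v)| ≤ 1) ∧
    (∑ v, S.dem v = S.dem .l) ∧
    (S.dem .l = (if ¬ S.switched (.vert b) .l then S.theta (.vert b) - S.theta .l else 0)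
      + (if ¬ S.switched .g .l then
          1 / ((Fintype.card V : ℝ) + 1) * (S.theta .g - S.theta .l) else 0)) ∧
    (¬ S.switched (.vert b) .l → |S.theta (.vert b) - S.theta .l| ≤ 1) ∧
    (¬ S.switched (.vert a) .g → |S.theta (.vert a) - S.theta .g| ≤ 1) ∧
    (¬ S.switched .g .l →
      |1 / ((Fintype.card V : ℝ) + 1) * (S.theta .g - S.theta .l)| ≤ 1) := by
  obtain ⟨_, hsym, hcap, hdem, hgen, hk⟩ := hS
  have hsy : ∀ x y, S.switched x y ↔ S.switched y x := fun x y => ⟨hsym x y, hsym y x⟩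
  have hdv : ∀ v, S.dem (.vert v) = 0 := by
    intro v
    have h := hdem (.vert v)
    simp [hamNet, mkNet] at h
    linarith
  have hdg : S.dem .g = 0 := by
    have h := hdem .g
    simp [hamNet, mkNet] at h
    linarith
  have hgv : ∀ v, S.gen (.vert v) = 0 := by
    intro v
    have h := hgen (.vert v)
    simp [hamNet, mkNet] at h
    linarith
  have hgl : S.gen .l = 0 := by
    have h := hgen .l
    simp [hamNet, mkNet] at h
    linarith
  refine ⟨?_, ?_, ?_, ?_, ?_, ?_, ?_⟩
  · intro v
    have h := hk (.vert v)
    rw [HBus.sum_eq, hdv, hgv, sub_zero] at h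
    refine Eq.trans ?_ h
    congr 1
    · congr 1
      · refine Finset.sum_congr rfl fun w _ => ?_
        by_cases hw : G.Adj v w
        · simp [hamNet, mkNet, hamSpec, hw, hw.symm]
        · have hw' : ¬ G.Adj w v := fun h => hw h.symm
          simp [hamNet, mkNet, hamSpec, hw, hw']
      · by_cases hv : v = a <;> simp [hamNet, mkNet, hamSpec, hv]
    · by_cases hv : v = b <;> simp [hamNet, mkNet, hamSpec, hv]
  · intro u v huv hs
    have h := hcap (.vert u) (.vert v) (by simp [hamNet, mkNet, hamSpec, huv]) hs
    simpa [hamNet, mkNet, hamSpec, huv] using h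
  · rw [HBus.sum_eq]; simp [hdv, hdg]
  · have h := hk .l
    rw [HBus.sum_eq, hgl, zero_sub] at h
    have h1 : (∑ v, (if (hamNet G a b).adj .l (.vert v) ∧ ¬ S.switched .l (.vert v) then
        (hamNet G a b).sus .l (.vert v) * (S.theta .l - S.theta (.vert v)) else 0)) =
        if ¬ S.switched (.vert b) .l then S.theta .l - S.theta (.vert b) else 0 := by
      rw [Finset.sum_eq_single b]
      · simp [hamNet, mkNet, hamSpec, hsy .l (.vert b)]
      · intro v _ hv
        simp [hamNet, mkNet, hamSpec, hv]
      · simp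
    rw [h1] at h
    have h2 : (if (hamNet G a b).adj .l .g ∧ ¬ S.switched .l .g then
        (hamNet G a b).sus .l .g * (S.theta .l - S.theta .g) else 0) =
        - (if ¬ S.switched .g .l then
          1 / ((Fintype.card V : ℝ) + 1) * (S.theta .g - S.theta .l) else 0) := by
      rw [hsy .l .g]
      by_cases hg : S.switched .g .l
      · simp [hg]
      · simp [hamNet, mkNet, hamSpec, hg]; ring
    rw [h2] at h
    have h3 : (if (hamNet G a b).adj .l .l ∧ ¬ S.switched .l .l then
        (hamNet G a b).sus .l .l * (S.theta .l - S.theta .l) else 0) = 0 := by simp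
    rw [h3] at h
    split_ifs at h ⊢ <;> linarith
  · intro hs
    have h := hcap (.vert b) .l (by simp [hamNet, mkNet, hamSpec]) hs
    simpa [hamNet, mkNet, hamSpec] using h
  · intro hs
    have h := hcap (.vert a) .g (by simp [hamNet, mkNet, hamSpec]) hs
    simpa [hamNet, mkNet, hamSpec] using h
  · intro hs
    have h := hcap .g .l (by simp [hamNet, mkNet, hamSpec]) hs
    simpa [hamNet, mkNet, hamSpec] using h

theorem ham_upper {V : Type*} [Fintype V] (G : SimpleGraph V) (a b : V)
    (S : LDCSolution (HBus V)) (hS : S.IsFeasible (hamNet G a b)) : ∑ v, S.dem v ≤ 2 := by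
  obtain ⟨-, -, h1, h2, h3, -, h4⟩ := ham_extract G a b S hS
  rw [h1, h2]
  by_cases p : S.switched (.vert b) .l <;> by_cases q : S.switched .g .l
  · simp [p, q]
  · have := (abs_le.mp (h4 q)).2
    rw [if_neg (by simpa using p), if_pos q]; linarith
  · have := (abs_le.mp (h3 p)).2
    rw [if_pos p, if_neg (by simpa using q)]; linarith
  · have := (abs_le.mp (h3 p)).2
    have := (abs_le.mp (h4 q)).2
    rw [if_pos p, if_pos q]; linarith

theorem walk_abs_le {V : Type*} (H : SimpleGraph V) (f : V → ℝ)
    (hf : ∀ u v, H.Adj u v → |f u - f v| ≤ 1) {u v : V} (p : H.Walk u v) :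
    f u - f v ≤ p.length := by
  induction p with
  | nil => simp
  | cons h p ih =>
    have := (abs_le.mp (hf _ _ h)).2
    rw [SimpleGraph.Walk.length_cons]; push_cast; linarith

theorem ham_forward {V : Type*} [Fintype V] (G : SimpleGraph V) (a b : V)
    (S : LDCSolution (HBus V)) (hS : S.IsFeasible (hamNet G a b)) (h2 : 2 = ∑ v, S.dem v) :
    ∃ τ : Fin (Fintype.card V) → V, Function.Bijective τ ∧
        (∀ i : Fin (Fintype.card V), (i : ℕ) = 0 → τ i = a) ∧
        (∀ i : Fin (Fintype.card V), (i : ℕ) = Fintype.card V - 1 → τ i = b) ∧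
        (∀ i j : Fin (Fintype.card V), (j : ℕ) = (i : ℕ) + 1 → G.Adj (τ i) (τ j)) := by
  have hsym := hS.2.1
  obtain ⟨hk, hc, hd, hl, hb, ha, hgl⟩ := ham_extract G a b S hS
  rw [hd, hl] at h2
  have hn : (0 : ℝ) < (Fintype.card V : ℝ) + 1 := by positivity
  have key : ¬ S.switched (.vert b) .l ∧ S.theta (.vert b) - S.theta .l = 1 ∧
      S.theta .g - S.theta .l = Fintype.card V + 1 := by
    by_cases p : S.switched (.vert b) .l <;> by_cases q : S.switched .g .l
    · simp [p, q] at h2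
    · have := (abs_le.mp (hgl q)).2
      rw [if_neg (by simpa using p), if_pos q] at h2; linarith
    · have := (abs_le.mp (hb p)).2
      rw [if_pos p, if_neg (by simpa using q)] at h2; linarith
    · have e1 := (abs_le.mp (hb p)).2
      have e2 := (abs_le.mp (hgl q)).2
      rw [if_pos p, if_pos q] at h2
      refine ⟨p, by linarith, ?_⟩
      have e3 : 1 / ((Fintype.card V : ℝ) + 1) * (S.theta .g - S.theta .l) = 1 := by linarith
      field_simp at e3
      linarith
  obtain ⟨hbl, tb, tg⟩ := key
  let H : SimpleGraph V :=
    { Adj := fun u v => G.Adj u v ∧ ¬ S.switched (.vert u) (.vert v)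
      symm := ⟨fun u v h => ⟨h.1.symm, fun h' => h.2 (hsym _ _ h')⟩⟩
      loopless := ⟨fun u h => G.loopless.irrefl u h.1⟩ }
  have cut : ∀ C : Finset V, (∀ u v, H.Adj u v → u ∈ C → v ∈ C) →
      (if a ∈ C ∧ ¬ S.switched (.vert a) .g then S.theta (.vert a) - S.theta .g else 0)
      + (if b ∈ C then (1 : ℝ) else 0) = 0 := by
    intro C hC
    have h0 := Finset.sum_congr (rfl : C = C) (fun v _ => hk v)
    rw [Finset.sum_add_distrib, Finset.sum_add_distrib, Finset.sum_const_zero] at h0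
    have i1 : (∑ v ∈ C, ∑ w, if G.Adj v w ∧ ¬ S.switched (.vert v) (.vert w) then
        S.theta (.vert v) - S.theta (.vert w) else 0) = 0 := by
      have j1 : (∑ v ∈ C, ∑ w, if G.Adj v w ∧ ¬ S.switched (.vert v) (.vert w) then
          S.theta (.vert v) - S.theta (.vert w) else 0) =
          ∑ v ∈ C, ∑ w ∈ C, if H.Adj v w then
          S.theta (.vert v) - S.theta (.vert w) else 0 := by
        refine Finset.sum_congr rfl fun v hv => ?_
        symm
        refine Finset.sum_subset (Finset.subset_univ _) fun w _ hw => ?_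
        exact if_neg fun h => hw (hC v w h hv)
      have j2 : (∑ v ∈ C, ∑ w ∈ C, if H.Adj v w then
          S.theta (.vert v) - S.theta (.vert w) else 0) =
          - ∑ v ∈ C, ∑ w ∈ C, if H.Adj v w then
          S.theta (.vert v) - S.theta (.vert w) else 0 := by
        conv_lhs => rw [Finset.sum_comm]
        rw [← Finset.sum_neg_distrib]
        refine Finset.sum_congr rfl fun v hv => ?_
        rw [← Finset.sum_neg_distrib]
        refine Finset.sum_congr rfl fun w hw => ?_
        by_cases hh : H.Adj v w
        · rw [if_pos hh, if_pos hh.symm]; ring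
        · rw [if_neg hh, if_neg (fun h => hh h.symm)]; ring
      rw [j1]; linarith
    have i2 : (∑ v ∈ C, if v = a ∧ ¬ S.switched (.vert v) .g then
        S.theta (.vert v) - S.theta .g else 0) =
        if a ∈ C ∧ ¬ S.switched (.vert a) .g then S.theta (.vert a) - S.theta .g else 0 := by
      by_cases hm : a ∈ C
      · rw [Finset.sum_eq_single_of_mem a hm (fun v _ hv => by simp [hv])]
        simp [hm]
      · rw [Finset.sum_eq_zero]
        · simp [hm]
        · intro v hv
          have : v ≠ a := fun h => hm (h ▸ hv)
          simp [this]
    have i3 : (∑ v ∈ C, if v = b ∧ ¬ S.switched (.vert v) .l then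
        S.theta (.vert v) - S.theta .l else 0) =
        if b ∈ C then (1 : ℝ) else 0 := by
      by_cases hm : b ∈ C
      · rw [Finset.sum_eq_single_of_mem b hm (fun v _ hv => by simp [hv])]
        simp [hm, hbl, tb]
      · rw [Finset.sum_eq_zero]
        · simp [hm]
        · intro v hv
          have : v ≠ b := fun h => hm (h ▸ hv)
          simp [this]
    rw [i1, i2, i3] at h0
    linarith
  have c1 := cut Finset.univ (by simp)
  have ta : ¬ S.switched (.vert a) .g ∧ S.theta (.vert a) - S.theta .g = -1 := by
    by_cases h : S.switched (.vert a) .g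
    · simp [h] at c1
    · simp [h] at c1; exact ⟨h, by linarith⟩
  have hreach : H.Reachable a b := by
    have c2 := cut (Finset.univ.filter fun v => H.Reachable a v) (by
      intro u v huv hu
      simp only [Finset.mem_filter, Finset.mem_univ, true_and] at hu ⊢
      exact hu.trans huv.reachable)
    by_contra hcon
    simp [ta.1, hcon] at c2
    linarith [ta.2]
  obtain ⟨p, hp⟩ := hreach.exists_isPath
  have hlt := hp.length_lt
  have hle := walk_abs_le H (fun v => S.theta (.vert v)) (fun u v h => hc u v h.1 h.2) p
  have hlen : (Fintype.card V : ℝ) ≤ (p.length + 1 : ℕ) := by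
    push_cast; linarith [ta.2]
  have hlen : Fintype.card V ≤ p.length + 1 := by exact_mod_cast hlen
  refine ⟨fun i => p.getVert i, ?_, ?_, ?_, ?_⟩
  · rw [Fintype.bijective_iff_injective_and_card]
    refine ⟨fun i j hij => ?_, by simp⟩
    have := hp.getVert_injOn (show (i : ℕ) ∈ {i | i ≤ p.length} by simp; omega)
      (show (j : ℕ) ∈ {i | i ≤ p.length} by simp; omega) hij
    exact Fin.ext this
  · intro i hi; simp [hi]
  · intro i hi
    have : (i : ℕ) = p.length := by omega
    simp [this]
  · intro i j hij
    have := p.adj_getVert_succ (i := i) (by omega)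
    rw [← hij] at this
    exact this.1

theorem ham_backward {V : Type*} [Fintype V] (G : SimpleGraph V) (a b : V) (hab : a ≠ b)
    (τ : Fin (Fintype.card V) → V) (hbij : Function.Bijective τ)
    (h0 : ∀ i : Fin (Fintype.card V), (i : ℕ) = 0 → τ i = a)
    (h1 : ∀ i : Fin (Fintype.card V), (i : ℕ) = Fintype.card V - 1 → τ i = b)
    (hadj : ∀ i j : Fin (Fintype.card V), (j : ℕ) = (i : ℕ) + 1 → G.Adj (τ i) (τ j)) :
    ∃ S : LDCSolution (HBus V), S.IsFeasible (hamNet G a b) ∧ 2 = ∑ v, S.dem v := by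
  have hn : 0 < Fintype.card V := Fintype.card_pos_iff.mpr ⟨a⟩
  have hn' : (0 : ℝ) < (Fintype.card V : ℝ) + 1 := by positivity
  let e := Equiv.ofBijective τ hbij
  let σ : V → ℕ := fun v => (e.symm v : ℕ)
  have hσt : ∀ v, τ (e.symm v) = v := fun v => e.apply_symm_apply v
  have hσlt : ∀ v, σ v < Fintype.card V := fun v => (e.symm v).2
  have hσa : ∀ v, σ v = 0 ↔ v = a := by
    intro v
    constructor
    · intro h; rw [← hσt v]; exact h0 _ h
    · rintro rfl
      have : e ⟨0, hn⟩ = v := h0 _ rfl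
      simp only [σ]; rw [← this, Equiv.symm_apply_apply]
  have hσb : ∀ v, σ v + 1 = Fintype.card V ↔ v = b := by
    intro v
    constructor
    · intro h; rw [← hσt v]; exact h1 _ (by change σ v = _; omega)
    · rintro rfl
      have : e ⟨Fintype.card V - 1, by omega⟩ = v := h1 _ rfl
      simp only [σ]; rw [← this, Equiv.symm_apply_apply]; simp; omega
  have hσadj : ∀ u v, σ v = σ u + 1 → G.Adj u v := by
    intro u v h
    have := hadj _ _ h
    rwa [hσt, hσt] at this
  have hsum : ∀ f : ℕ → ℝ, ∑ v, f (σ v) = ∑ i ∈ Finset.range (Fintype.card V), f i := by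
    intro f
    rw [Finset.sum_range, ← e.sum_comp]
    simp [σ]
  let θ : HBus V → ℝ := fun x => match x with
    | .vert v => (Fintype.card V : ℝ) - σ v
    | .g => Fintype.card V + 1
    | .l => 0
  let sw : HBus V → HBus V → Prop := fun x y => match x, y with
    | .vert u, .vert v => G.Adj u v ∧ ¬ (σ u = σ v + 1 ∨ σ v = σ u + 1)
    | _, _ => False
  have sw1 : ∀ u v, sw (.vert u) (.vert v) ↔
      G.Adj u v ∧ ¬ (σ u = σ v + 1 ∨ σ v = σ u + 1) := fun _ _ => Iff.rfl
  have sw2 : ∀ x, ¬ sw x .g := by rintro (_ | _ | _) h <;> exact h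
  have sw3 : ∀ x, ¬ sw x .l := by rintro (_ | _ | _) h <;> exact h
  have sw4 : ∀ x, ¬ sw .g x := fun _ h => h
  have sw5 : ∀ x, ¬ sw .l x := fun _ h => h
  clear_value sw
  have θa : θ (.vert a) = Fintype.card V := by simp [θ, (hσa a).2 rfl]
  have θb : θ (.vert b) = 1 := by
    have := (hσb b).2 rfl
    simp only [θ]; rw [← this]; push_cast; ring
  have θg : θ .g = Fintype.card V + 1 := rfl
  have θl : θ .l = 0 := rfl
  refine ⟨⟨sw, θ, fun x => if x = .g then 2 else 0, fun x => if x = .l then 2 else 0⟩,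
    ⟨?_, ?_, ?_, ?_, ?_, ?_⟩, ?_⟩
  · rintro (u | _ | _) (v | _ | _) h <;>
      first | exact (sw2 _ h).elim | exact (sw3 _ h).elim | exact (sw4 _ h).elim |
        exact (sw5 _ h).elim | skip
    have : G.Adj u v := ((sw1 _ _).1 h).1
    simp [hamNet, mkNet, hamSpec, this]
  · rintro (u | _ | _) (v | _ | _) h <;>
      first | exact (sw2 _ h).elim | exact (sw3 _ h).elim | exact (sw4 _ h).elim |
        exact (sw5 _ h).elim | skip
    have h := (sw1 _ _).1 h
    exact (sw1 _ _).2 ⟨h.1.symm, fun h' => h.2 h'.symm⟩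
  · have e1 : |(1 : ℝ)| ≤ 1 := by norm_num
    have e2 : |(-1 : ℝ)| ≤ 1 := by norm_num
    rintro (u | _ | _) (v | _ | _) h hs
    · have hG : G.Adj u v := by
        simpa [hamNet, mkNet, hamSpec, G.adj_comm v u] using h
      have hs' : σ u = σ v + 1 ∨ σ v = σ u + 1 := by
        by_contra hc; exact hs ((sw1 _ _).2 ⟨hG, hc⟩)
      have : |θ (.vert u) - θ (.vert v)| ≤ 1 := by
        rcases hs' with h' | h' <;> simp [θ, h']
      simpa [hamNet, mkNet, hamSpec, hG] using this
    · have hv : u = a := by simpa [hamNet, mkNet, hamSpec] using h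
      subst hv
      simp [hamNet, mkNet, hamSpec, θa, θg]
    · have hv : u = b := by simpa [hamNet, mkNet, hamSpec] using h
      subst hv
      simp [hamNet, mkNet, hamSpec, θb, θl]
    · have hv : v = a := by simpa [hamNet, mkNet, hamSpec] using h
      subst hv
      simp [hamNet, mkNet, hamSpec, θa, θg]
    · simp [hamNet, mkNet, hamSpec] at h
    · have : ((Fintype.card V : ℝ) + 1)⁻¹ * (Fintype.card V + 1) = 1 := by field_simp
      simp [hamNet, mkNet, hamSpec, θg, θl, this]
    · have hv : v = b := by simpa [hamNet, mkNet, hamSpec] using h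
      subst hv
      simp [hamNet, mkNet, hamSpec, θb, θl]
    · have : ((Fintype.card V : ℝ) + 1)⁻¹ * (-1 + -Fintype.card V) = -1 := by
        field_simp; ring
      simp [hamNet, mkNet, hamSpec, θg, θl, this]
    · simp [hamNet, mkNet, hamSpec] at h
  · rintro (u | _ | _) <;> simp [hamNet, mkNet]
  · rintro (u | _ | _) <;> simp [hamNet, mkNet]
  · have hinv : ((Fintype.card V : ℝ) + 1)⁻¹ * (Fintype.card V + 1) = 1 := by field_simp
    rintro (u | _ | _)
    · rw [HBus.sum_eq]
      have s1 : (∑ v, if (hamNet G a b).adj (.vert u) (.vert v) ∧ ¬ sw (.vert u) (.vert v) then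
          (hamNet G a b).sus (.vert u) (.vert v) * (θ (.vert u) - θ (.vert v)) else 0)
          = (if σ u + 1 < Fintype.card V then (1 : ℝ) else 0) - (if 0 < σ u then 1 else 0) := by
        have t1 : ∀ v, (if (hamNet G a b).adj (.vert u) (.vert v) ∧
            ¬ sw (.vert u) (.vert v) then
            (hamNet G a b).sus (.vert u) (.vert v) * (θ (.vert u) - θ (.vert v)) else 0)
            = (fun i : ℕ => (if i = σ u + 1 then (1 : ℝ) else 0)
                - (if σ u = i + 1 then 1 else 0)) (σ v) := by
          intro v
          by_cases hG : G.Adj u v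
          · by_cases q1 : σ v = σ u + 1
            · simp [hamNet, mkNet, hamSpec, hG, sw1, sw2, sw3, sw4, sw5, θ, q1]; rw [if_neg (by omega)]; norm_num
            · by_cases q2 : σ u = σ v + 1
              · simp [hamNet, mkNet, hamSpec, hG, sw1, sw2, sw3, sw4, sw5, θ, q2]; rw [if_neg (by omega)]; norm_num
              · simp [hG, sw1, sw2, sw3, sw4, sw5, q1, q2]
          · have q1 : ¬ σ v = σ u + 1 := fun h => hG (hσadj _ _ h)
            have q2 : ¬ σ u = σ v + 1 := fun h => hG (hσadj _ _ h).symm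
            simp [hamNet, mkNet, hamSpec, hG, G.adj_comm v u, q1, q2]
        rw [Finset.sum_congr rfl fun v _ => t1 v, hsum (fun i : ℕ => (if i = σ u + 1 then (1 : ℝ) else 0)
                - (if σ u = i + 1 then 1 else 0)), Finset.sum_sub_distrib]
        congr 1
        · simp [Finset.sum_ite_eq']
        · split_ifs with hp
          · rw [Finset.sum_eq_single (σ u - 1)]
            · rw [if_pos (by omega)]
            · intro i _ hi; rw [if_neg (by omega)]
            · intro hi
              exact absurd (Finset.mem_range.mpr (by have := hσlt u; omega)) hi
          · exact Finset.sum_eq_zero fun i _ => if_neg (by omega)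
      refine (congrArg₂ (· + ·) (congrArg₂ (· + ·) s1 rfl) rfl).trans ?_
      have hua := hσa u
      have hub := hσb u
      have hlt := hσlt u
      by_cases qa : u = a
      · have qb : u ≠ b := fun h => hab (qa.symm.trans h)
        have r1 : σ u = 0 := hua.2 qa
        have r2 : σ u + 1 < Fintype.card V := by
          have : ¬ (σ u + 1 = Fintype.card V) := fun h => qb (hub.1 h)
          omega
        rw [if_pos r2, if_neg (by omega)]
        subst qa
        simp [hamNet, mkNet, hamSpec, sw1, sw2, sw3, sw4, sw5, θa, θg, qb]
      · have r1 : 0 < σ u := by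
          have : σ u ≠ 0 := fun h => qa (hua.1 h)
          omega
        by_cases qb : u = b
        · have r2 : ¬ σ u + 1 < Fintype.card V := by have := hub.2 qb; omega
          rw [if_pos r1, if_neg r2]
          subst qb
          simp [hamNet, mkNet, hamSpec, sw1, sw2, sw3, sw4, sw5, θb, θl, qa]
        · have r2 : σ u + 1 < Fintype.card V := by
            have : ¬ (σ u + 1 = Fintype.card V) := fun h => qb (hub.1 h)
            omega
          rw [if_pos r1, if_pos r2]
          simp [hamNet, mkNet, hamSpec, sw1, sw2, sw3, sw4, sw5, qa, qb]
    · rw [HBus.sum_eq, Finset.sum_eq_single a]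
      · simp [hamNet, mkNet, hamSpec, sw1, sw2, sw3, sw4, sw5, θa, θg, θl, hinv]; norm_num
      · intro v _ hv
        simp [hamNet, mkNet, hamSpec, hv]
      · simp
    · rw [HBus.sum_eq, Finset.sum_eq_single b]
      · have : ((Fintype.card V : ℝ) + 1)⁻¹ * (-1 + -Fintype.card V) = -1 := by
          field_simp; ring
        simp [hamNet, mkNet, hamSpec, sw1, sw2, sw3, sw4, sw5, θb, θg, θl, this]; norm_num
      · intro v _ hv
        simp [hamNet, mkNet, hamSpec, hv]
      · simp
  · rw [HBus.sum_eq]; simp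

/-- The maximum switching flow of `Net_h(G)` equals `2` iff `G` has
a Hamiltonian path from `a` to `b` (an enumeration `τ` of all vertices, starting at
`a`, ending at `b`, with consecutive vertices adjacent). -/
theorem hamNet_msf_eq_two_iff_hamiltonianPath (V : Type*) [Fintype V]
    (G : SimpleGraph V) (a b : V) (hab : a ≠ b) :
    IsGreatest
        {s : ℝ | ∃ S : LDCSolution (HBus V), S.IsFeasible (hamNet G a b) ∧
          s = ∑ v, S.dem v} 2 ↔
      ∃ τ : Fin (Fintype.card V) → V, Function.Bijective τ ∧
        (∀ i : Fin (Fintype.card V), (i : ℕ) = 0 → τ i = a) ∧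
        (∀ i : Fin (Fintype.card V), (i : ℕ) = Fintype.card V - 1 → τ i = b) ∧
        (∀ i j : Fin (Fintype.card V), (j : ℕ) = (i : ℕ) + 1 → G.Adj (τ i) (τ j)) := by
  constructor
  · rintro ⟨⟨S, hS, h2⟩, -⟩
    exact ham_forward G a b S hS h2
  · rintro ⟨τ, hbij, h0, h1, hadj⟩
    refine ⟨ham_backward G a b hab τ hbij h0 h1 hadj, ?_⟩
    rintro s ⟨S, hS, rfl⟩
    exact ham_upper G a b S hS
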